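/- For every positive integer m and every integer n ≥ 2, the set C_m can be covered by at most (2m·log n + 8)^m · n^m closed intervals of length n^{−2m}, where log denotes the natural logarithm. -/

import Mathlib

open Set

/-- The value `g(a₁ ⋯ a_k) = 1/(a₁ + 1/(a₂ + ⋯ + 1/a_k))` of a finite continued fraction,
with `g(∅) = 0`. -/
noncomputable def cfVal : List ℕ → ℝ
  | [] => 0
  | a :: t => 1 / ((a : ℝ) + cfVal t)

/-- A word of positive integers whose last letter (if any) is at least `2`. -/
def isCFWord (a : List ℕ) : Prop := (∀ x ∈ a, 1 ≤ x) ∧ ∀ ℓ ∈ a.getLast?, 2 ≤ ℓ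

/-- `C_m`: the set of rationals in `(0,1)` whose continued fraction expansion
has length `m`. -/
def Cset (m : ℕ) : Set ℝ :=
  {x : ℝ | ∃ a : List ℕ, a.length = m ∧ isCFWord a ∧ x = cfVal a}

/-- `Ω` can be covered by at most `B` closed intervals of length `r`. -/
def CoveredBy (Ω : Set ℝ) (r B : ℝ) : Prop :=
  ∃ t : Finset ℝ, (t.card : ℝ) ≤ B ∧ Ω ⊆ ⋃ c ∈ t, Set.Icc c (c + r)

/-- Values of all words of positive integers of length `m`. -/
def Dset (m : ℕ) : Set ℝ :=
  {x : ℝ | ∃ a : List ℕ, a.length = m ∧ (∀ y ∈ a, 1 ≤ y) ∧ x = cfVal a}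

theorem cfVal_nonneg' (a : List ℕ) : 0 ≤ cfVal a := by
  induction a with
  | nil => simp [cfVal]
  | cons a t ih => simp only [cfVal]; positivity

theorem step_icc (a c ρ y : ℝ) (ha : 1 ≤ a) (hy : 0 ≤ y) (hρ : 0 < ρ)
    (h : y ∈ Set.Icc c (c + ρ * a ^ 2)) :
    1 / (a + y) ∈ Set.Icc (1 / (a + max c 0 + ρ * a ^ 2)) (1 / (a + max c 0 + ρ * a ^ 2) + ρ) := by
  obtain ⟨h1, h2⟩ := h
  have hc0 : 0 ≤ max c 0 := le_max_right _ _
  have hcc : c ≤ max c 0 := le_max_left _ _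
  have hcy : max c 0 ≤ y := max_le h1 hy
  generalize max c 0 = d at *
  have hpos : 0 < ρ * a ^ 2 := by positivity
  constructor
  · apply one_div_le_one_div_of_le <;> linarith
  · have e1 : 1 / (a + y) ≤ 1 / (a + d) := by
      apply one_div_le_one_div_of_le <;> linarith
    have e2 : 1 / (a + d) ≤ 1 / (a + d + ρ * a ^ 2) + ρ := by
      have p1 : 0 < a + d := by linarith
      have p2 : 0 < a + d + ρ * a ^ 2 := by linarith
      have e3 : 1 / (a + d) - 1 / (a + d + ρ * a ^ 2)
          = ρ * a ^ 2 / ((a + d) * (a + d + ρ * a ^ 2)) := by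
        field_simp; ring
      have e4 : ρ * a ^ 2 / ((a + d) * (a + d + ρ * a ^ 2)) ≤ ρ := by
        rw [div_le_iff₀ (by positivity)]
        apply mul_le_mul_of_nonneg_left _ hρ.le
        nlinarith [mul_pos p1 hpos]
      linarith
    linarith

theorem cover_D (m : ℕ) : ∀ R : ℝ, 1 ≤ R →
    CoveredBy (Dset m) ((R ^ 2)⁻¹) (R * (3 + Real.log R) ^ m) := by
  classical
  induction m with
  | zero =>
    intro R hR
    refine ⟨{0}, by simpa using hR, ?_⟩
    rintro x ⟨a, ha, -, rfl⟩
    have : a = [] := List.length_eq_zero_iff.mp ha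
    subst this
    simp only [cfVal, Finset.mem_singleton, Set.iUnion_iUnion_eq_left, zero_add]
    exact ⟨le_rfl, by positivity⟩
  | succ m ih =>
    intro R hR
    have hR0 : 0 < R := by linarith
    have hlog : 0 ≤ Real.log R := Real.log_nonneg hR
    have H : ∀ a : ℕ, ∃ t : Finset ℝ, a ∈ Finset.Icc 1 ⌊R⌋₊ →
        ((t.card : ℝ) ≤ (R / a) * (3 + Real.log (R / a)) ^ m ∧
          Dset m ⊆ ⋃ c ∈ t, Set.Icc c (c + ((R / a) ^ 2)⁻¹)) := by
      intro a
      by_cases ha : a ∈ Finset.Icc 1 ⌊R⌋₊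
      · rw [Finset.mem_Icc] at ha
        have h1 : (1 : ℝ) ≤ a := by exact_mod_cast ha.1
        have h2 : (a : ℝ) ≤ R := (Nat.le_floor_iff hR0.le).1 ha.2
        obtain ⟨t, ht⟩ := ih (R / a) (by rw [le_div_iff₀ (by linarith)]; linarith)
        exact ⟨t, fun _ => ht⟩
      · exact ⟨∅, fun h => absurd h ha⟩
    choose T hT using H
    refine ⟨((Finset.Icc 1 ⌊R⌋₊).biUnion fun a => (T a).image
        fun c => 1 / ((a : ℝ) + max c 0 + (R ^ 2)⁻¹ * (a : ℝ) ^ 2)) ∪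
        (Finset.range (⌊R⌋₊ + 1)).image fun j : ℕ => (j : ℝ) * (R ^ 2)⁻¹, ?_, ?_⟩
    · set X := 3 + Real.log R with hX
      have hXp : 1 ≤ X ^ m := one_le_pow₀ (by linarith)
      have hfl : (⌊R⌋₊ : ℝ) ≤ R := Nat.floor_le hR0.le
      have hfl1 : 1 ≤ ⌊R⌋₊ := by rw [Nat.one_le_floor_iff]; exact hR
      have c1 : ((((Finset.Icc 1 ⌊R⌋₊).biUnion fun a => (T a).image
          fun c => 1 / ((a : ℝ) + max c 0 + (R ^ 2)⁻¹ * (a : ℝ) ^ 2)).card : ℕ) : ℝ)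
          ≤ R * X ^ m * (1 + Real.log R) := by
        calc _ ≤ ((∑ a ∈ Finset.Icc 1 ⌊R⌋₊, (T a).card : ℕ) : ℝ) := by
              exact_mod_cast Finset.card_biUnion_le.trans
                (Finset.sum_le_sum fun a _ => Finset.card_image_le)
          _ ≤ ∑ a ∈ Finset.Icc 1 ⌊R⌋₊, R * X ^ m * (a : ℝ)⁻¹ := by
              push_cast
              apply Finset.sum_le_sum
              intro a ha
              refine (hT a ha).1.trans ?_
              rw [Finset.mem_Icc] at ha
              have h1 : (1 : ℝ) ≤ a := by exact_mod_cast ha.1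
              have h2 : (a : ℝ) ≤ R := (Nat.le_floor_iff hR0.le).1 ha.2
              have h3 : 1 ≤ R / a := by rw [le_div_iff₀ (by linarith)]; linarith
              have h4 : 0 ≤ Real.log (R / a) := Real.log_nonneg h3
              have h5 : Real.log (R / a) ≤ Real.log R :=
                Real.log_le_log (by linarith) (div_le_self hR0.le h1)
              have h6 : (3 + Real.log (R / a)) ^ m ≤ X ^ m :=
                pow_le_pow_left₀ (by linarith) (by linarith) m
              calc R / a * (3 + Real.log (R / a)) ^ m ≤ R / a * X ^ m :=
                    mul_le_mul_of_nonneg_left h6 (by linarith)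
                _ = _ := by rw [div_eq_mul_inv]; ring
          _ = R * X ^ m * ∑ a ∈ Finset.Icc 1 ⌊R⌋₊, (a : ℝ)⁻¹ := by rw [Finset.mul_sum]
          _ ≤ R * X ^ m * (1 + Real.log R) := by
              apply mul_le_mul_of_nonneg_left _ (by positivity)
              have h := harmonic_le_one_add_log ⌊R⌋₊
              rw [harmonic_eq_sum_Icc] at h
              push_cast at h
              refine h.trans ?_
              have := Real.log_le_log (by exact_mod_cast hfl1) hfl
              linarith
      have c2 : ((((Finset.range (⌊R⌋₊ + 1)).image
          fun j : ℕ => (j : ℝ) * (R ^ 2)⁻¹).card : ℕ) : ℝ) ≤ R * X ^ m * 2 := by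
        have : ((((Finset.range (⌊R⌋₊ + 1)).image
          fun j : ℕ => (j : ℝ) * (R ^ 2)⁻¹).card : ℕ) : ℝ) ≤ ((⌊R⌋₊ + 1 : ℕ) : ℝ) := by
          exact_mod_cast Finset.card_image_le.trans (by simp)
        push_cast at this
        nlinarith
      refine (Nat.cast_le.2 (Finset.card_union_le _ _)).trans ?_
      push_cast
      calc _ ≤ _ := add_le_add c1 c2
        _ = R * X ^ (m + 1) := by rw [pow_succ, hX]; ring
    · rintro x ⟨w, hw, hpos, rfl⟩
      match w, hw, hpos with
      | a :: w, hw, hpos =>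
        have ha1 : 1 ≤ a := hpos a (by simp)
        have h1 : (1 : ℝ) ≤ a := by exact_mod_cast ha1
        have hy := cfVal_nonneg' w
        simp only [cfVal, Set.mem_iUnion, exists_prop]
        by_cases ha : a ≤ ⌊R⌋₊
        · have hm : a ∈ Finset.Icc 1 ⌊R⌋₊ := Finset.mem_Icc.2 ⟨ha1, ha⟩
          have hmem : cfVal w ∈ Dset m :=
            ⟨w, by simpa using hw, fun y hy => hpos y (by simp [hy]), rfl⟩
          have := (hT a hm).2 hmem
          simp only [Set.mem_iUnion, exists_prop] at this
          obtain ⟨c, hc, hcy⟩ := this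
          refine ⟨_, Finset.mem_union_left _ (Finset.mem_biUnion.2
            ⟨a, hm, Finset.mem_image_of_mem _ hc⟩), ?_⟩
          apply step_icc _ _ _ _ h1 hy (by positivity)
          convert hcy using 3
          rw [div_pow, inv_div]
          ring
        · have hRa : R ≤ a := ((Nat.floor_lt hR0.le).1 (not_le.1 ha)).le
          set x := 1 / ((a : ℝ) + cfVal w) with hx
          have hx0 : 0 ≤ x := by positivity
          have hxR : x ≤ 1 / R := one_div_le_one_div_of_le hR0 (by linarith)
          have hxR2 : x * R ^ 2 ≤ R := by
            calc x * R ^ 2 ≤ 1 / R * R ^ 2 := by gcongr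
              _ = R := by field_simp
          have hp : 0 < R ^ 2 := by positivity
          refine ⟨(⌊x * R ^ 2⌋₊ : ℝ) * (R ^ 2)⁻¹, Finset.mem_union_right _
            (Finset.mem_image.2 ⟨⌊x * R ^ 2⌋₊, ?_, rfl⟩), ?_, ?_⟩
          · rw [Finset.mem_range]
            exact Nat.lt_succ_of_le (Nat.floor_le_floor hxR2)
          · rw [← div_eq_mul_inv, div_le_iff₀ hp]
            exact Nat.floor_le (by positivity)
          · have := (Nat.lt_floor_add_one (x * R ^ 2)).le
            rw [← le_div_iff₀ hp] at this
            refine this.trans (le_of_eq ?_)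
            rw [div_eq_mul_inv]; ring

/-- For `m ≥ 1` and `n ≥ 2`, the set `C_m` can be covered by at most
`(2m·log n + 8)^m · n^m` closed intervals of length `n^{-2m}`. -/
theorem cf_covering_Cm (m n : ℕ) (hm : 0 < m) (hn : 2 ≤ n) :
    CoveredBy (Cset m) (((n : ℝ) ^ (2 * m))⁻¹)
      ((2 * (m : ℝ) * Real.log n + 8) ^ m * (n : ℝ) ^ m) := by
  have hn1 : (1 : ℝ) ≤ n := by exact_mod_cast (by omega : 1 ≤ n)
  obtain ⟨t, ht, hc⟩ := cover_D m ((n : ℝ) ^ m) (one_le_pow₀ hn1)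
  have hl : 0 ≤ (m : ℝ) * Real.log n := mul_nonneg (by positivity) (Real.log_nonneg hn1)
  refine ⟨t, ht.trans ?_, ?_⟩
  · rw [Real.log_pow, mul_comm]
    apply mul_le_mul_of_nonneg_right _ (by positivity)
    exact pow_le_pow_left₀ (by linarith) (by linarith) m
  · rw [← pow_mul, mul_comm m 2] at hc
    refine Set.Subset.trans ?_ hc
    rintro x ⟨a, h1, h2, h3⟩
    exact ⟨a, h1, h2.1, h3⟩
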